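/- Let φ(x) be a formula of the correspondence language with at most the free variable x. Then φ(x) is logically equivalent to the (2,2)-standard x-translation ST_22(I,x) of some modal intuitionistic formula I if and only if there exists k ∈ ℕ such that φ(x) is invariant with respect to (2,2)-modal k-asimulations. -/

import Mathlib

namespace ModalIntAsim

/-- Binary relation symbols of the correspondence vocabulary: R, R_□, R_◇. -/
inductive RelSym : Type
  | r | box | diam
deriving DecidableEq

/-- Formulas of the correspondence language: classical first-order logic without
identity, with variables indexed by `ℕ`, unary predicate letters `P n` (n : ℕ),
and the three binary relation symbols. -/
inductive FOForm : Type
  | falsum : FOForm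
  | pred : ℕ → ℕ → FOForm            -- `pred n v` is `P_n(x_v)`
  | rel : RelSym → ℕ → ℕ → FOForm    -- `rel s v w` is `S(x_v, x_w)`
  | conj : FOForm → FOForm → FOForm
  | disj : FOForm → FOForm → FOForm
  | impl : FOForm → FOForm → FOForm
  | all : ℕ → FOForm → FOForm
  | ex : ℕ → FOForm → FOForm

namespace FOForm

/-- Free variables of a correspondence formula. -/
def freeVars : FOForm → Finset ℕ
  | falsum => ∅
  | pred _ v => {v}
  | rel _ v w => {v, w}
  | conj f g => f.freeVars ∪ g.freeVars
  | disj f g => f.freeVars ∪ g.freeVars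
  | impl f g => f.freeVars ∪ g.freeVars
  | all v f => f.freeVars \ {v}
  | ex v f => f.freeVars \ {v}

/-- The unary predicate letters occurring in a formula (the binary relation
symbols R, R_□, R_◇ are regarded as belonging to every vocabulary Σ_φ). -/
def predLetters : FOForm → Finset ℕ
  | falsum => ∅
  | pred n _ => {n}
  | rel _ _ _ => ∅
  | conj f g => f.predLetters ∪ g.predLetters
  | disj f g => f.predLetters ∪ g.predLetters
  | impl f g => f.predLetters ∪ g.predLetters
  | all _ f => f.predLetters
  | ex _ f => f.predLetters

/-- Degree of a formula: the greatest number of nested quantifiers. -/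
def degree : FOForm → ℕ
  | falsum => 0
  | pred _ _ => 0
  | rel _ _ _ => 0
  | conj f g => max f.degree g.degree
  | disj f g => max f.degree g.degree
  | impl f g => max f.degree g.degree
  | all _ f => f.degree + 1
  | ex _ f => f.degree + 1

end FOForm

/-- A model of the correspondence language: a domain together with
interpretations of R, R_□, R_◇ and of the unary predicate letters.
(A Θ-model only consults the letters in Θ.) -/
structure Model : Type 1 where
  U : Type
  rel : U → U → Prop
  relBox : U → U → Prop
  relDiam : U → U → Prop
  pred : ℕ → U → Prop

/-- Interpretation of a binary relation symbol in a model. -/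
def Model.relOf (M : Model) : RelSym → M.U → M.U → Prop
  | .r => M.rel
  | .box => M.relBox
  | .diam => M.relDiam

/-- Tarskian satisfaction of a formula in a model under an assignment. -/
def Sat (M : Model) : FOForm → (ℕ → M.U) → Prop
  | .falsum, _ => False
  | .pred n v, α => M.pred n (α v)
  | .rel s v w, α => M.relOf s (α v) (α w)
  | .conj f g, α => Sat M f α ∧ Sat M g α
  | .disj f g, α => Sat M f α ∨ Sat M g α
  | .impl f g, α => Sat M f α → Sat M g α
  | .all v f, α => ∀ u : M.U, Sat M f (Function.update α v u)
  | .ex v f, α => ∃ u : M.U, Sat M f (Function.update α v u)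

/-- `M, a ⊨ φ(x)`: φ is true in `M` under any assignment sending `x` to `a`. -/
def SatAt (M : Model) (a : M.U) (x : ℕ) (φ : FOForm) : Prop :=
  ∀ α : ℕ → M.U, α x = a → Sat M φ α

/-- Logical equivalence of correspondence formulas. -/
def Equiv (φ ψ : FOForm) : Prop :=
  ∀ (M : Model) (α : ℕ → M.U), Sat M φ α ↔ Sat M ψ α

/-- Logical entailment between correspondence formulas. -/
def Entails (φ ψ : FOForm) : Prop :=
  ∀ (M : Model) (α : ℕ → M.U), Sat M φ α → Sat M ψ α

/-- Modal intuitionistic formulas: built from propositional letters `p n`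
using ⊥, ∧, ∨, →, □, ◇. -/
inductive MForm : Type
  | bot : MForm
  | prop : ℕ → MForm
  | conj : MForm → MForm → MForm
  | disj : MForm → MForm → MForm
  | impl : MForm → MForm → MForm
  | box : MForm → MForm
  | diam : MForm → MForm

/-- The (i,j)-standard x-translation `ST_ij`.  `boxOne = true` means the box
clause (□₁) is used (i = 1), `boxOne = false` means (□₂) (i = 2); likewise
`diamOne = true` means the diamond clause (◇₁) (j = 1) and `diamOne = false`
means (◇₂) (j = 2).  Bound variables are chosen fresh as `x+1`, `x+2`. -/
def ST (boxOne diamOne : Bool) : MForm → ℕ → FOForm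
  | .bot, _ => .falsum
  | .prop n, x => .pred n x
  | .conj I J, x => .conj (ST boxOne diamOne I x) (ST boxOne diamOne J x)
  | .disj I J, x => .disj (ST boxOne diamOne I x) (ST boxOne diamOne J x)
  | .impl I J, x =>
      .all (x + 1) (.impl (.rel .r x (x + 1))
        (.impl (ST boxOne diamOne I (x + 1)) (ST boxOne diamOne J (x + 1))))
  | .box I, x =>
      if boxOne then
        .all (x + 1) (.impl (.rel .box x (x + 1)) (ST boxOne diamOne I (x + 1)))
      else
        .all (x + 1) (.impl (.rel .r x (x + 1))
          (.all (x + 2) (.impl (.rel .box (x + 1) (x + 2)) (ST boxOne diamOne I (x + 2)))))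
  | .diam I, x =>
      if diamOne then
        .ex (x + 1) (.conj (.rel .diam x (x + 1)) (ST boxOne diamOne I (x + 1)))
      else
        .all (x + 1) (.impl (.rel .r x (x + 1))
          (.ex (x + 2) (.conj (.rel .diam (x + 1) (x + 2)) (ST boxOne diamOne I (x + 2)))))

/-! ### Conditions on relations between tuples (the k-asimulation conditions).
A relation between the two models is represented by its two directed
components; `N` is the model of the source tuple and `P` that of the target
tuple.  A tuple `(ā_m, a)` is represented as the list `as ++ [a]`, with
`m = as.length`. -/

section TupleConds

variable (N P : Model)

/-- The "p-type" condition: related tuples are nonempty and of equal length. -/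
def TypeCond (A : List N.U → List P.U → Prop) : Prop :=
  ∀ as bs, A as bs → as ≠ [] ∧ as.length = bs.length

/-- (p-base). -/
def BaseCond (Θ : Set ℕ) (A : List N.U → List P.U → Prop) : Prop :=
  ∀ (as : List N.U) (bs : List P.U) (a : N.U) (b : P.U),
    A (as ++ [a]) (bs ++ [b]) → ∀ n ∈ Θ, N.pred n a → P.pred n b

/-- (p-step). -/
def StepCond (k : ℕ) (A : List N.U → List P.U → Prop)
    (Arev : List P.U → List N.U → Prop) : Prop :=
  ∀ (as : List N.U) (bs : List P.U) (a : N.U) (b d : P.U),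
    A (as ++ [a]) (bs ++ [b]) → P.rel b d → as.length < k →
    ∃ c : N.U, N.rel a c ∧ A (as ++ [a, c]) (bs ++ [b, d]) ∧
      Arev (bs ++ [b, d]) (as ++ [a, c])

/-- (p-box-1). -/
def Box1Cond (k : ℕ) (A : List N.U → List P.U → Prop) : Prop :=
  ∀ (as : List N.U) (bs : List P.U) (a : N.U) (b d : P.U),
    A (as ++ [a]) (bs ++ [b]) → P.relBox b d → as.length < k →
    ∃ c : N.U, N.relBox a c ∧ A (as ++ [a, c]) (bs ++ [b, d])

/-- (p-box-2). -/
def Box2Cond (k : ℕ) (A : List N.U → List P.U → Prop) : Prop :=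
  ∀ (as : List N.U) (bs : List P.U) (a : N.U) (b d f : P.U),
    A (as ++ [a]) (bs ++ [b]) → P.rel b d → P.relBox d f → as.length + 1 < k →
    ∃ c e : N.U, N.rel a c ∧ N.relBox c e ∧ A (as ++ [a, c, e]) (bs ++ [b, d, f])

/-- (p-diam-1). -/
def Diam1Cond (k : ℕ) (A : List N.U → List P.U → Prop) : Prop :=
  ∀ (as : List N.U) (bs : List P.U) (a c : N.U) (b : P.U),
    A (as ++ [a]) (bs ++ [b]) → N.relDiam a c → as.length < k →
    ∃ d : P.U, P.relDiam b d ∧ A (as ++ [a, c]) (bs ++ [b, d])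

/-- (p-diam-2(1)). -/
def Diam2aCond (k : ℕ) (A B : List N.U → List P.U → Prop) : Prop :=
  ∀ (as : List N.U) (bs : List P.U) (a : N.U) (b d : P.U),
    A (as ++ [a]) (bs ++ [b]) → P.rel b d → as.length + 1 < k →
    ∃ c : N.U, N.rel a c ∧ B (as ++ [a, c]) (bs ++ [b, d])

/-- (p-diam-2(2)). -/
def Diam2bCond (k : ℕ) (B A : List N.U → List P.U → Prop) : Prop :=
  ∀ (as : List N.U) (bs : List P.U) (a c : N.U) (b : P.U),
    B (as ++ [a]) (bs ++ [b]) → N.relDiam a c → as.length < k →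
    ∃ d : P.U, P.relDiam b d ∧ A (as ++ [a, c]) (bs ++ [b, d])

end TupleConds

/-- An (i,1)-modal ⟨(M₁,t),(M₂,u)⟩_k-asimulation (j = 1): a single relation `A`
given by its two directed components `A12`, `A21`. -/
def IsKAsimD1 (boxOne : Bool) (Θ : Set ℕ) (M₁ M₂ : Model) (t : M₁.U) (u : M₂.U) (k : ℕ)
    (A12 : List M₁.U → List M₂.U → Prop) (A21 : List M₂.U → List M₁.U → Prop) : Prop :=
  TypeCond M₁ M₂ A12 ∧ TypeCond M₂ M₁ A21 ∧
  A12 [t] [u] ∧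
  BaseCond M₁ M₂ Θ A12 ∧ BaseCond M₂ M₁ Θ A21 ∧
  StepCond M₁ M₂ k A12 A21 ∧ StepCond M₂ M₁ k A21 A12 ∧
  (if boxOne then Box1Cond M₁ M₂ k A12 ∧ Box1Cond M₂ M₁ k A21
   else Box2Cond M₁ M₂ k A12 ∧ Box2Cond M₂ M₁ k A21) ∧
  Diam1Cond M₁ M₂ k A12 ∧ Diam1Cond M₂ M₁ k A21

/-- An (i,2)-modal ⟨(M₁,t),(M₂,u)⟩_k-asimulation (j = 2): an ordered pair
(A, B) of relations, each given by its two directed components. -/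
def IsKAsimD2 (boxOne : Bool) (Θ : Set ℕ) (M₁ M₂ : Model) (t : M₁.U) (u : M₂.U) (k : ℕ)
    (A12 : List M₁.U → List M₂.U → Prop) (A21 : List M₂.U → List M₁.U → Prop)
    (B12 : List M₁.U → List M₂.U → Prop) (B21 : List M₂.U → List M₁.U → Prop) : Prop :=
  TypeCond M₁ M₂ A12 ∧ TypeCond M₂ M₁ A21 ∧
  TypeCond M₁ M₂ B12 ∧ TypeCond M₂ M₁ B21 ∧
  A12 [t] [u] ∧
  BaseCond M₁ M₂ Θ A12 ∧ BaseCond M₂ M₁ Θ A21 ∧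
  StepCond M₁ M₂ k A12 A21 ∧ StepCond M₂ M₁ k A21 A12 ∧
  (if boxOne then Box1Cond M₁ M₂ k A12 ∧ Box1Cond M₂ M₁ k A21
   else Box2Cond M₁ M₂ k A12 ∧ Box2Cond M₂ M₁ k A21) ∧
  Diam2aCond M₁ M₂ k A12 B12 ∧ Diam2aCond M₂ M₁ k A21 B21 ∧
  Diam2bCond M₁ M₂ k B12 A12 ∧ Diam2bCond M₂ M₁ k B21 A21

/-- φ(x) is invariant with respect to (i,1)-modal k-asimulations. -/
def KInvariantD1 (boxOne : Bool) (x : ℕ) (φ : FOForm) (k : ℕ) : Prop :=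
  ∀ Θ : Set ℕ, (φ.predLetters : Set ℕ) ⊆ Θ →
  ∀ (M₁ M₂ : Model) (t : M₁.U) (u : M₂.U)
    (A12 : List M₁.U → List M₂.U → Prop) (A21 : List M₂.U → List M₁.U → Prop),
    IsKAsimD1 boxOne Θ M₁ M₂ t u k A12 A21 →
    ∀ (a : M₁.U) (b : M₂.U), A12 [a] [b] → SatAt M₁ a x φ → SatAt M₂ b x φ

/-- φ(x) is invariant with respect to (i,2)-modal k-asimulations. -/
def KInvariantD2 (boxOne : Bool) (x : ℕ) (φ : FOForm) (k : ℕ) : Prop :=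
  ∀ Θ : Set ℕ, (φ.predLetters : Set ℕ) ⊆ Θ →
  ∀ (M₁ M₂ : Model) (t : M₁.U) (u : M₂.U)
    (A12 : List M₁.U → List M₂.U → Prop) (A21 : List M₂.U → List M₁.U → Prop)
    (B12 : List M₁.U → List M₂.U → Prop) (B21 : List M₂.U → List M₁.U → Prop),
    IsKAsimD2 boxOne Θ M₁ M₂ t u k A12 A21 B12 B21 →
    ∀ (a : M₁.U) (b : M₂.U), A12 [a] [b] → SatAt M₁ a x φ → SatAt M₂ b x φ

/-! ### Conditions for asimulations *simpliciter* (relations between elements). -/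

section ElemConds

variable (N P : Model)

/-- (base). -/
def BaseCondE (Θ : Set ℕ) (A : N.U → P.U → Prop) : Prop :=
  ∀ (a : N.U) (b : P.U), A a b → ∀ n ∈ Θ, N.pred n a → P.pred n b

/-- (step). -/
def StepCondE (A : N.U → P.U → Prop) (Arev : P.U → N.U → Prop) : Prop :=
  ∀ (a : N.U) (b d : P.U), A a b → P.rel b d →
    ∃ c : N.U, N.rel a c ∧ A c d ∧ Arev d c

/-- (box-1). -/
def Box1CondE (A : N.U → P.U → Prop) : Prop :=
  ∀ (a : N.U) (b d : P.U), A a b → P.relBox b d →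
    ∃ c : N.U, N.relBox a c ∧ A c d

/-- (box-2). -/
def Box2CondE (A : N.U → P.U → Prop) : Prop :=
  ∀ (a : N.U) (b d f : P.U), A a b → P.rel b d → P.relBox d f →
    ∃ c e : N.U, N.rel a c ∧ N.relBox c e ∧ A e f

/-- (diam-1). -/
def Diam1CondE (A : N.U → P.U → Prop) : Prop :=
  ∀ (a c : N.U) (b : P.U), A a b → N.relDiam a c →
    ∃ d : P.U, P.relDiam b d ∧ A c d

/-- (diam-2(1)). -/
def Diam2aCondE (A B : N.U → P.U → Prop) : Prop :=
  ∀ (a : N.U) (b d : P.U), A a b → P.rel b d →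
    ∃ c : N.U, N.rel a c ∧ B c d

/-- (diam-2(2)). -/
def Diam2bCondE (B A : N.U → P.U → Prop) : Prop :=
  ∀ (a c : N.U) (b : P.U), B a b → N.relDiam a c →
    ∃ d : P.U, P.relDiam b d ∧ A c d

end ElemConds

/-- An (i,1)-modal ⟨(M₁,t),(M₂,u)⟩-asimulation (j = 1). -/
def IsAsimD1 (boxOne : Bool) (Θ : Set ℕ) (M₁ M₂ : Model) (t : M₁.U) (u : M₂.U)
    (A12 : M₁.U → M₂.U → Prop) (A21 : M₂.U → M₁.U → Prop) : Prop :=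
  A12 t u ∧
  BaseCondE M₁ M₂ Θ A12 ∧ BaseCondE M₂ M₁ Θ A21 ∧
  StepCondE M₁ M₂ A12 A21 ∧ StepCondE M₂ M₁ A21 A12 ∧
  (if boxOne then Box1CondE M₁ M₂ A12 ∧ Box1CondE M₂ M₁ A21
   else Box2CondE M₁ M₂ A12 ∧ Box2CondE M₂ M₁ A21) ∧
  Diam1CondE M₁ M₂ A12 ∧ Diam1CondE M₂ M₁ A21

/-- An (i,2)-modal ⟨(M₁,t),(M₂,u)⟩-asimulation (j = 2). -/
def IsAsimD2 (boxOne : Bool) (Θ : Set ℕ) (M₁ M₂ : Model) (t : M₁.U) (u : M₂.U)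
    (A12 : M₁.U → M₂.U → Prop) (A21 : M₂.U → M₁.U → Prop)
    (B12 : M₁.U → M₂.U → Prop) (B21 : M₂.U → M₁.U → Prop) : Prop :=
  A12 t u ∧
  BaseCondE M₁ M₂ Θ A12 ∧ BaseCondE M₂ M₁ Θ A21 ∧
  StepCondE M₁ M₂ A12 A21 ∧ StepCondE M₂ M₁ A21 A12 ∧
  (if boxOne then Box1CondE M₁ M₂ A12 ∧ Box1CondE M₂ M₁ A21
   else Box2CondE M₁ M₂ A12 ∧ Box2CondE M₂ M₁ A21) ∧
  Diam2aCondE M₁ M₂ A12 B12 ∧ Diam2aCondE M₂ M₁ A21 B21 ∧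
  Diam2bCondE M₁ M₂ B12 A12 ∧ Diam2bCondE M₂ M₁ B21 A21

/-- φ(x) is invariant with respect to (i,1)-modal asimulations. -/
def InvariantD1 (boxOne : Bool) (x : ℕ) (φ : FOForm) : Prop :=
  ∀ Θ : Set ℕ, (φ.predLetters : Set ℕ) ⊆ Θ →
  ∀ (M₁ M₂ : Model) (t : M₁.U) (u : M₂.U)
    (A12 : M₁.U → M₂.U → Prop) (A21 : M₂.U → M₁.U → Prop),
    IsAsimD1 boxOne Θ M₁ M₂ t u A12 A21 →
    ∀ (a : M₁.U) (b : M₂.U), A12 a b → SatAt M₁ a x φ → SatAt M₂ b x φ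

/-- φ(x) is invariant with respect to (i,2)-modal asimulations. -/
def InvariantD2 (boxOne : Bool) (x : ℕ) (φ : FOForm) : Prop :=
  ∀ Θ : Set ℕ, (φ.predLetters : Set ℕ) ⊆ Θ →
  ∀ (M₁ M₂ : Model) (t : M₁.U) (u : M₂.U)
    (A12 : M₁.U → M₂.U → Prop) (A21 : M₂.U → M₁.U → Prop)
    (B12 : M₁.U → M₂.U → Prop) (B21 : M₂.U → M₁.U → Prop),
    IsAsimD2 boxOne Θ M₁ M₂ t u A12 A21 B12 B21 →
    ∀ (a : M₁.U) (b : M₂.U), A12 a b → SatAt M₁ a x φ → SatAt M₂ b x φ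

/-! ### Types, complete conjunctions, ω-saturation. -/

/-- `int(φ,x,l)`: the set of (2,2)-standard x-translations of modal
intuitionistic formulas which are (Σ_φ,x,l)-formulas. -/
def intSet (φ : FOForm) (x l : ℕ) : Set FOForm :=
  {ψ | (∃ I : MForm, ψ = ST false false I x) ∧
    ψ.predLetters ⊆ φ.predLetters ∧ ψ.freeVars ⊆ {x} ∧ ψ.degree ≤ l}

/-- `tp_l(φ(x),M,a)`. -/
def tpSet (φ : FOForm) (x l : ℕ) (M : Model) (a : M.U) : Set FOForm :=
  {ψ | ψ ∈ intSet φ x l ∧ SatAt M a x ψ}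

/-- Conjunction of a nonempty list of formulas. -/
def listConj : FOForm → List FOForm → FOForm
  | ψ, [] => ψ
  | ψ, χ :: L => FOForm.conj ψ (listConj χ L)

/-- Ψ(x) is a complete (φ,x,k)-conjunction. -/
def IsCompleteConj (φ : FOForm) (x k : ℕ) (Ψ : FOForm) : Prop :=
  (∃ (ψ₀ : FOForm) (L : List FOForm), ψ₀ ∈ intSet φ x k ∧
    (∀ χ ∈ L, χ ∈ intSet φ x k) ∧ Ψ = listConj ψ₀ L) ∧
  ∃ (M : Model) (a : M.U), SatAt M a x (FOForm.conj Ψ φ) ∧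
    ∀ ψ ∈ tpSet φ x k M a, Entails Ψ ψ

/-- `int_x(Θ)` for the (i,j)-standard translation. -/
def intX (Θ : Set ℕ) (boxOne diamOne : Bool) (x : ℕ) : Set FOForm :=
  {ψ | (∃ I : MForm, ψ = ST boxOne diamOne I x) ∧ (ψ.predLetters : Set ℕ) ⊆ Θ}

/-- `tp_x(M,t)` for the (i,j)-standard translation. -/
def tpX (Θ : Set ℕ) (boxOne diamOne : Bool) (x : ℕ) (M : Model) (t : M.U) : Set FOForm :=
  {ψ | ψ ∈ intX Θ boxOne diamOne x ∧ SatAt M t x ψ}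

/-- `imp_x(M,t) = ⋂ { t̄p_x(M,u) : t R_◇ u }` (for the (2,2)-translation). -/
def impX (Θ : Set ℕ) (x : ℕ) (M : Model) (t : M.U) : Set FOForm :=
  {ψ | ψ ∈ intX Θ false false x ∧ ∀ u : M.U, M.relDiam t u → ¬ SatAt M u x ψ}

/-- ω-saturation: for every finite tuple of parameters (the first `n` values of
an assignment `α`) and every set `Γ` of formulas with finitely many free
variables beyond the parameters, if `Γ` is consistent with the first-order
theory of `[M,ā]` (i.e. satisfiable together with it in some model), then `Γ`
is realized in `[M,ā]`. -/
def OmegaSaturated (M : Model) : Prop :=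
  ∀ (n : ℕ) (α : ℕ → M.U) (Γ : Set FOForm),
    (∃ k : ℕ, ∀ γ ∈ Γ, γ.freeVars ⊆ Finset.range (n + k)) →
    (∃ (N : Model) (β : ℕ → N.U),
      (∀ ψ : FOForm, ψ.freeVars ⊆ Finset.range n → Sat M ψ α → Sat N ψ β) ∧
      ∀ γ ∈ Γ, Sat N γ β) →
    ∃ α' : ℕ → M.U, (∀ i < n, α' i = α i) ∧ ∀ γ ∈ Γ, Sat M γ α'

/-! ### Relativization to a class κ of models. -/

/-- κ(Θ) is first-order axiomatizable for every finite Θ (with R ∈ Θ): for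
every finite set `S` of unary predicate letters there is a set of Θ-sentences
axiomatizing membership in κ. -/
def FinAxiomatizable (κ : Set Model) : Prop :=
  ∀ S : Finset ℕ, ∃ Ax : Set FOForm,
    (∀ ψ ∈ Ax, ψ.freeVars = ∅ ∧ (ψ.predLetters : Set ℕ) ⊆ (S : Set ℕ)) ∧
    ∀ M : Model, M ∈ κ ↔ ∀ ψ ∈ Ax, ∀ α : ℕ → M.U, Sat M ψ α

/-- φ κ-follows from ψ: {ψ, ¬φ} is not κ-satisfiable. -/
def KappaFollows (κ : Set Model) (ψ φ : FOForm) : Prop :=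
  ¬ ∃ M : Model, M ∈ κ ∧ ∃ α : ℕ → M.U, Sat M ψ α ∧ ¬ Sat M φ α

/-- κ-equivalence of formulas. -/
def KappaEquiv (κ : Set Model) (φ ψ : FOForm) : Prop :=
  KappaFollows κ φ ψ ∧ KappaFollows κ ψ φ

/-- φ(x) is κ-invariant with respect to (i,1)-modal asimulations. -/
def KappaInvariantD1 (κ : Set Model) (boxOne : Bool) (x : ℕ) (φ : FOForm) : Prop :=
  ∀ Θ : Set ℕ, (φ.predLetters : Set ℕ) ⊆ Θ →
  ∀ (M₁ M₂ : Model), M₁ ∈ κ → M₂ ∈ κ →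
  ∀ (t : M₁.U) (u : M₂.U)
    (A12 : M₁.U → M₂.U → Prop) (A21 : M₂.U → M₁.U → Prop),
    IsAsimD1 boxOne Θ M₁ M₂ t u A12 A21 →
    ∀ (a : M₁.U) (b : M₂.U), A12 a b → SatAt M₁ a x φ → SatAt M₂ b x φ

/-- φ(x) is κ-invariant with respect to (i,2)-modal asimulations. -/
def KappaInvariantD2 (κ : Set Model) (boxOne : Bool) (x : ℕ) (φ : FOForm) : Prop :=
  ∀ Θ : Set ℕ, (φ.predLetters : Set ℕ) ⊆ Θ →
  ∀ (M₁ M₂ : Model), M₁ ∈ κ → M₂ ∈ κ →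
  ∀ (t : M₁.U) (u : M₂.U)
    (A12 : M₁.U → M₂.U → Prop) (A21 : M₂.U → M₁.U → Prop)
    (B12 : M₁.U → M₂.U → Prop) (B21 : M₂.U → M₁.U → Prop),
    IsAsimD2 boxOne Θ M₁ M₂ t u A12 A21 B12 B21 →
    ∀ (a : M₁.U) (b : M₂.U), A12 a b → SatAt M₁ a x φ → SatAt M₂ b x φ

/-- φ(x) is κ-invariant with respect to (i,j)-modal asimulations
(`diamOne = true` means j = 1). -/
def KappaInvariant (κ : Set Model) (boxOne diamOne : Bool) (x : ℕ) (φ : FOForm) : Prop :=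
  if diamOne then KappaInvariantD1 κ boxOne x φ else KappaInvariantD2 κ boxOne x φ



/-! ### Semantics of modal formulas and auxiliary lemmas -/

/-- Forcing of a modal formula under the (2,2)-reading. -/
def Frc (M : Model) : MForm → M.U → Prop
  | .bot, _ => False
  | .prop n, a => M.pred n a
  | .conj I J, a => Frc M I a ∧ Frc M J a
  | .disj I J, a => Frc M I a ∨ Frc M J a
  | .impl I J, a => ∀ b, M.rel a b → Frc M I b → Frc M J b
  | .box I, a => ∀ b, M.rel a b → ∀ c, M.relBox b c → Frc M I c
  | .diam I, a => ∀ b, M.rel a b → ∃ c, M.relDiam b c ∧ Frc M I c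

theorem sat_ST (M : Model) (I : MForm) :
    ∀ (x : ℕ) (α : ℕ → M.U), Sat M (ST false false I x) α ↔ Frc M I (α x) := by
  induction I with
  | bot => intro x α; simp [ST, Sat, Frc]
  | prop n => intro x α; simp [ST, Sat, Frc]
  | conj I J hI hJ => intro x α; simp [ST, Sat, Frc, hI, hJ]
  | disj I J hI hJ => intro x α; simp [ST, Sat, Frc, hI, hJ]
  | impl I J hI hJ => intro x α; simp [ST, Sat, Frc, hI, hJ, Model.relOf]
  | box I hI => intro x α; simp [ST, Sat, Frc, hI, Model.relOf]
  | diam I hI => intro x α; simp [ST, Sat, Frc, hI, Model.relOf]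

/-- Coincidence lemma for free variables. -/
theorem sat_congr (M : Model) (φ : FOForm) :
    ∀ (α β : ℕ → M.U), (∀ v ∈ φ.freeVars, α v = β v) → (Sat M φ α ↔ Sat M φ β) := by
  induction φ with
  | falsum => intro α β _; simp [Sat]
  | pred n v => intro α β h; simp [Sat, h v (by simp [FOForm.freeVars])]
  | rel s v w =>
    intro α β h
    simp [Sat, h v (by simp [FOForm.freeVars]), h w (by simp [FOForm.freeVars])]
  | conj f g hf hg =>
    intro α β h
    simp only [FOForm.freeVars, Finset.mem_union] at h
    simp only [Sat, hf α β (fun v hv => h v (.inl hv)), hg α β (fun v hv => h v (.inr hv))]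
  | disj f g hf hg =>
    intro α β h
    simp only [FOForm.freeVars, Finset.mem_union] at h
    simp only [Sat, hf α β (fun v hv => h v (.inl hv)), hg α β (fun v hv => h v (.inr hv))]
  | impl f g hf hg =>
    intro α β h
    simp only [FOForm.freeVars, Finset.mem_union] at h
    simp only [Sat, hf α β (fun v hv => h v (.inl hv)), hg α β (fun v hv => h v (.inr hv))]
  | all v f hf =>
    intro α β h
    simp only [Sat]
    refine forall_congr' fun u => hf _ _ fun w hw => ?_
    by_cases hwv : w = v
    · subst hwv; simp
    · simp [hwv, h w (by simp [FOForm.freeVars, hw, hwv])]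
  | ex v f hf =>
    intro α β h
    simp only [Sat]
    refine exists_congr fun u => hf _ _ fun w hw => ?_
    by_cases hwv : w = v
    · subst hwv; simp
    · simp [hwv, h w (by simp [FOForm.freeVars, hw, hwv])]

/-- The model with the letters outside `Θ` made false. -/
def cut (Θ : Set ℕ) (M : Model) : Model where
  U := M.U
  rel := M.rel
  relBox := M.relBox
  relDiam := M.relDiam
  pred n a := n ∈ Θ ∧ M.pred n a

theorem sat_cut (Θ : Set ℕ) (M : Model) (φ : FOForm) :
    (φ.predLetters : Set ℕ) ⊆ Θ → ∀ α : ℕ → M.U, Sat (cut Θ M) φ α ↔ Sat M φ α := by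
  induction φ with
  | falsum => intro _ α; exact Iff.rfl
  | pred n v =>
    intro h α
    have hn : n ∈ Θ := h (by simp [FOForm.predLetters])
    exact ⟨fun h => h.2, fun h => ⟨hn, h⟩⟩
  | rel s v w => intro _ α; cases s <;> exact Iff.rfl
  | conj f g hf hg =>
    intro h α
    simp only [FOForm.predLetters, Finset.coe_union, Set.union_subset_iff] at h
    exact and_congr (hf h.1 α) (hg h.2 α)
  | disj f g hf hg =>
    intro h α
    simp only [FOForm.predLetters, Finset.coe_union, Set.union_subset_iff] at h
    exact or_congr (hf h.1 α) (hg h.2 α)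
  | impl f g hf hg =>
    intro h α
    simp only [FOForm.predLetters, Finset.coe_union, Set.union_subset_iff] at h
    exact imp_congr (hf h.1 α) (hg h.2 α)
  | all v f hf =>
    intro h α
    exact forall_congr' fun u => hf h (Function.update α v u)
  | ex v f hf =>
    intro h α
    exact exists_congr fun u => hf h (Function.update α v u)

/-- Degree of a modal formula. -/
def mdeg : MForm → ℕ
  | .bot => 0
  | .prop _ => 0
  | .conj I J => max (mdeg I) (mdeg J)
  | .disj I J => max (mdeg I) (mdeg J)
  | .impl I J => max (mdeg I) (mdeg J) + 1
  | .box I => mdeg I + 2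
  | .diam I => mdeg I + 2

/-- Half of the preservation statement, for a single formula. -/
def Pres (k : ℕ) (I : MForm) (N P : Model) (A : List N.U → List P.U → Prop) : Prop :=
  ∀ as bs a b, A (as ++ [a]) (bs ++ [b]) → mdeg I + as.length ≤ k → Frc N I a → Frc P I b

theorem len_eq {N P : Model} {A : List N.U → List P.U → Prop} (h : TypeCond N P A)
    {as : List N.U} {bs : List P.U} {a : N.U} {b : P.U} (hA : A (as ++ [a]) (bs ++ [b])) :
    as.length = bs.length := by
  have := (h _ _ hA).2
  simpa using this

theorem pres_impl {k : ℕ} {I J : MForm} {N P : Model} {A : List N.U → List P.U → Prop}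
    {A' : List P.U → List N.U → Prop} (hT : TypeCond N P A)
    (hI : Pres k I P N A') (hJ : Pres k J N P A) (hs : StepCond N P k A A') :
    Pres k (.impl I J) N P A := by
  intro as bs a b hA hd hF d hbd hId
  simp only [mdeg] at hd
  have hl := len_eq hT hA
  obtain ⟨c, hac, h1, h2⟩ := hs as bs a b d hA hbd (by omega)
  refine hJ (as ++ [a]) (bs ++ [b]) c d (by simpa using h1) (by simp; omega) ?_
  exact hF c hac (hI (bs ++ [b]) (as ++ [a]) d c (by simpa using h2) (by simp; omega) hId)

theorem pres_box {k : ℕ} {I : MForm} {N P : Model} {A : List N.U → List P.U → Prop}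
    (hI : Pres k I N P A) (hs : Box2Cond N P k A) : Pres k (.box I) N P A := by
  intro as bs a b hA hd hF d hbd f hdf
  simp only [mdeg] at hd
  obtain ⟨c, e, hac, hce, h1⟩ := hs as bs a b d f hA hbd hdf (by omega)
  exact hI (as ++ [a, c]) (bs ++ [b, d]) e f (by simpa using h1) (by simp; omega)
    (hF c hac e hce)

theorem pres_diam {k : ℕ} {I : MForm} {N P : Model} {A B : List N.U → List P.U → Prop}
    (hI : Pres k I N P A) (h1 : Diam2aCond N P k A B) (h2 : Diam2bCond N P k B A) :
    Pres k (.diam I) N P A := by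
  intro as bs a b hA hd hF d hbd
  simp only [mdeg] at hd
  obtain ⟨c, hac, hB⟩ := h1 as bs a b d hA hbd (by omega)
  obtain ⟨e, hce, he⟩ := hF c hac
  obtain ⟨f, hdf, hf⟩ := h2 (as ++ [a]) (bs ++ [b]) c e d (by simpa using hB) hce
    (by simp; omega)
  exact ⟨f, hdf, hI (as ++ [a, c]) (bs ++ [b, d]) e f (by simpa using hf) (by simp; omega) he⟩

theorem pres_all {k : ℕ} {M₁ M₂ : Model} {t : M₁.U} {u : M₂.U}
    {A12 : List M₁.U → List M₂.U → Prop} {A21 : List M₂.U → List M₁.U → Prop}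
    {B12 : List M₁.U → List M₂.U → Prop} {B21 : List M₂.U → List M₁.U → Prop}
    (h : IsKAsimD2 false Set.univ M₁ M₂ t u k A12 A21 B12 B21) (I : MForm) :
    Pres k I M₁ M₂ A12 ∧ Pres k I M₂ M₁ A21 := by
  obtain ⟨hT1, hT2, -, -, -, hb1, hb2, hs1, hs2, hx, hd1, hd2, he1, he2⟩ := h
  simp only [Bool.false_eq_true, if_false] at hx
  induction I with
  | bot => exact ⟨fun _ _ _ _ _ _ h => h.elim, fun _ _ _ _ _ _ h => h.elim⟩
  | prop n =>
    exact ⟨fun as bs a b hA _ h => hb1 as bs a b hA n trivial h,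
      fun as bs a b hA _ h => hb2 as bs a b hA n trivial h⟩
  | conj I J hI hJ =>
    constructor <;> intro as bs a b hA hd h <;> simp only [mdeg] at hd
    · exact ⟨hI.1 as bs a b hA (by omega) h.1, hJ.1 as bs a b hA (by omega) h.2⟩
    · exact ⟨hI.2 as bs a b hA (by omega) h.1, hJ.2 as bs a b hA (by omega) h.2⟩
  | disj I J hI hJ =>
    constructor <;> intro as bs a b hA hd h <;> simp only [mdeg] at hd
    · exact h.imp (hI.1 as bs a b hA (by omega)) (hJ.1 as bs a b hA (by omega))
    · exact h.imp (hI.2 as bs a b hA (by omega)) (hJ.2 as bs a b hA (by omega))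
  | impl I J hI hJ => exact ⟨pres_impl hT1 hI.2 hJ.1 hs1, pres_impl hT2 hI.1 hJ.2 hs2⟩
  | box I hI => exact ⟨pres_box hI.1 hx.1, pres_box hI.2 hx.2⟩
  | diam I hI => exact ⟨pres_diam hI.1 hd1 he1, pres_diam hI.2 hd2 he2⟩

theorem base_cut {Θ : Set ℕ} {N P : Model} {A : List N.U → List P.U → Prop}
    (h : BaseCond N P Θ A) : BaseCond (cut Θ N) (cut Θ P) Set.univ A :=
  fun as bs a b hA n _ hn => ⟨hn.1, h as bs a b hA n hn.1 hn.2⟩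

theorem dir1 (x : ℕ) (φ : FOForm) (I : MForm) (hI : Equiv φ (ST false false I x)) :
    KInvariantD2 false x φ (mdeg I) := by
  intro Θ hΘ M₁ M₂ t u A12 A21 B12 B21 h a b hab ha β hβ
  have h' : IsKAsimD2 false Set.univ (cut Θ M₁) (cut Θ M₂) t u (mdeg I) A12 A21 B12 B21 := by
    obtain ⟨h1, h2, h3, h4, h5, hb1, hb2, h6⟩ := h
    exact ⟨h1, h2, h3, h4, h5, base_cut hb1, base_cut hb2, h6⟩
  have key := (pres_all h' I).1 [] [] a b hab (by simp)
  have e1 : Frc (cut Θ M₁) I a :=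
    (sat_ST (cut Θ M₁) I x (fun _ => a)).1
      ((hI (cut Θ M₁) (fun _ => a)).1 ((sat_cut Θ M₁ φ hΘ _).2 (ha (fun _ => a) rfl)))
  refine (sat_cut Θ M₂ φ hΘ β).1 ((hI (cut Θ M₂) β).2 ((sat_ST (cut Θ M₂) I x β).2 ?_))
  rw [hβ]
  exact key e1

/-! ### The converse direction -/

/-- Finite conjunction. -/
def conjL : List MForm → MForm
  | [] => .impl .bot .bot
  | I :: L => .conj I (conjL L)

/-- Finite disjunction. -/
def disjL : List MForm → MForm
  | [] => .bot
  | I :: L => .disj I (disjL L)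

theorem frc_conjL (M : Model) (a : M.U) (L : List MForm) :
    Frc M (conjL L) a ↔ ∀ I ∈ L, Frc M I a := by
  induction L with
  | nil => simp [conjL, Frc]
  | cons I L ih => simp [conjL, Frc, ih]

theorem frc_disjL (M : Model) (a : M.U) (L : List MForm) :
    Frc M (disjL L) a ↔ ∃ I ∈ L, Frc M I a := by
  induction L with
  | nil => simp [disjL, Frc]
  | cons I L ih => simp [disjL, Frc, ih]

/-- Implications between a conjunction and a disjunction of members of `L`. -/
def imps (L : List MForm) : List MForm :=
  L.sublists.flatMap fun X => L.sublists.map fun Y => .impl (conjL X) (disjL Y)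

/-- Boxed disjunctions of members of `L`. -/
def boxes (L : List MForm) : List MForm :=
  L.sublists.map fun Y => .box (disjL Y)

/-- Conjunctions of members of `L`. -/
def conjs (L : List MForm) : List MForm := L.sublists.map conjL

/-- Diamonds of disjunctions of conjunctions of members of `L`. -/
def diams (L : List MForm) : List MForm :=
  (conjs L).sublists.map fun Y => .diam (disjL Y)

/-- Finite characteristic sets of formulas of degree at most `l`. -/
def gen (S : List ℕ) : ℕ → List MForm
  | 0 => S.map .prop
  | 1 => S.map .prop ++ imps (S.map .prop)
  | l + 2 => S.map .prop ++ (imps (gen S (l + 1)) ++ (boxes (gen S l) ++ diams (gen S l)))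

theorem mem_gen_prop {S : List ℕ} {n : ℕ} (h : n ∈ S) (l : ℕ) : MForm.prop n ∈ gen S l := by
  rcases l with _ | _ | l <;> simp [gen, h]

theorem mem_gen_imps {S : List ℕ} {I : MForm} (l : ℕ) (h : I ∈ imps (gen S l)) :
    I ∈ gen S (l + 1) := by
  rcases l with _ | l
  · simp only [gen] at h ⊢; exact List.mem_append_right _ h
  · rw [gen]; exact List.mem_append_right _ (List.mem_append_left _ h)

theorem mem_gen_boxes {S : List ℕ} {I : MForm} (l : ℕ) (h : I ∈ boxes (gen S l)) :
    I ∈ gen S (l + 2) := by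
  rw [gen]
  exact List.mem_append_right _ (List.mem_append_right _ (List.mem_append_left _ h))

theorem mem_gen_diams {S : List ℕ} {I : MForm} (l : ℕ) (h : I ∈ diams (gen S l)) :
    I ∈ gen S (l + 2) := by
  rw [gen]
  exact List.mem_append_right _ (List.mem_append_right _ (List.mem_append_right _ h))

/-- Preservation of the formulas in `L`. -/
def Le (L : List MForm) (N P : Model) (a : N.U) (b : P.U) : Prop :=
  ∀ I ∈ L, Frc N I a → Frc P I b

/-- Preservation of `∃`-diamond conjunctions of formulas in `L`. -/
def LeD (L : List MForm) (N P : Model) (a : N.U) (b : P.U) : Prop :=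
  ∀ I ∈ conjs L, (∃ c, N.relDiam a c ∧ Frc N I c) → ∃ d, P.relDiam b d ∧ Frc P I d

open Classical in
/-- Members of `L` satisfying `p`. -/
noncomputable def sel (p : MForm → Prop) (L : List MForm) : List MForm :=
  L.filter fun I => decide (p I)

theorem mem_sel {p : MForm → Prop} {L : List MForm} {I : MForm} :
    I ∈ sel p L ↔ I ∈ L ∧ p I := by
  simp [sel]

theorem sel_mem (p : MForm → Prop) (L : List MForm) : sel p L ∈ L.sublists := by
  rw [List.mem_sublists]; exact List.filter_sublist

theorem le_step {S : List ℕ} {l : ℕ} {N P : Model} {a : N.U} {b d : P.U}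
    (h : Le (gen S (l + 1)) N P a b) (hbd : P.rel b d) :
    ∃ c, N.rel a c ∧ Le (gen S l) N P c d ∧ Le (gen S l) P N d c := by
  by_contra hc
  push Not at hc
  have hmem : MForm.impl (conjL (sel (fun I => Frc P I d) (gen S l)))
      (disjL (sel (fun I => ¬ Frc P I d) (gen S l))) ∈ gen S (l + 1) := by
    apply mem_gen_imps
    simp only [imps, List.mem_flatMap, List.mem_map]
    exact ⟨_, sel_mem _ _, _, sel_mem _ _, rfl⟩
  have h1 := h _ hmem ?_ d hbd ((frc_conjL _ _ _).2 fun I hI => (mem_sel.1 hI).2)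
  · obtain ⟨I, hI, hF⟩ := (frc_disjL _ _ _).1 h1
    exact (mem_sel.1 hI).2 hF
  · intro c hac hX
    rw [frc_conjL] at hX
    by_contra hY
    rw [frc_disjL] at hY
    push Not at hY
    refine hc c hac ?_ ?_
    · intro I hI hIc
      by_contra hId
      exact hY I (mem_sel.2 ⟨hI, hId⟩) hIc
    · intro I hI hId
      exact hX I (mem_sel.2 ⟨hI, hId⟩)

theorem le_box {S : List ℕ} {l : ℕ} {N P : Model} {a : N.U} {b d f : P.U}
    (h : Le (gen S (l + 2)) N P a b) (hbd : P.rel b d) (hdf : P.relBox d f) :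
    ∃ c e, N.rel a c ∧ N.relBox c e ∧ Le (gen S l) N P e f := by
  by_contra hc
  push Not at hc
  have hmem : MForm.box (disjL (sel (fun I => ¬ Frc P I f) (gen S l))) ∈ gen S (l + 2) := by
    apply mem_gen_boxes
    simp only [boxes, List.mem_map]
    exact ⟨_, sel_mem _ _, rfl⟩
  have h1 := h _ hmem ?_ d hbd f hdf
  · obtain ⟨I, hI, hF⟩ := (frc_disjL _ _ _).1 h1
    exact (mem_sel.1 hI).2 hF
  · intro c hac e hce
    by_contra hY
    rw [frc_disjL] at hY
    push Not at hY
    refine hc c e hac hce fun I hI hIe => ?_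
    by_contra hIf
    exact hY I (mem_sel.2 ⟨hI, hIf⟩) hIe

theorem le_diamA {S : List ℕ} {l : ℕ} {N P : Model} {a : N.U} {b d : P.U}
    (h : Le (gen S (l + 2)) N P a b) (hbd : P.rel b d) :
    ∃ c, N.rel a c ∧ LeD (gen S l) N P c d := by
  by_contra hc
  push Not at hc
  have hmem : MForm.diam (disjL (sel (fun I => ¬ ∃ f, P.relDiam d f ∧ Frc P I f)
      (conjs (gen S l)))) ∈ gen S (l + 2) := by
    apply mem_gen_diams
    simp only [diams, List.mem_map]
    exact ⟨_, sel_mem _ _, rfl⟩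
  have h1 := h _ hmem ?_ d hbd
  · obtain ⟨f, hdf, hf⟩ := h1
    obtain ⟨I, hI, hF⟩ := (frc_disjL _ _ _).1 hf
    exact (mem_sel.1 hI).2 ⟨f, hdf, hF⟩
  · intro c hac
    by_contra hY
    refine hc c hac fun I hI hIe => ?_
    obtain ⟨e, hce, he⟩ := hIe
    by_contra hIf
    exact hY ⟨e, hce, (frc_disjL _ _ _).2 ⟨I, mem_sel.2 ⟨hI, hIf⟩, he⟩⟩

theorem le_diamB {L : List MForm} {N P : Model} {a c : N.U} {b : P.U}
    (h : LeD L N P a b) (hac : N.relDiam a c) :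
    ∃ d, P.relDiam b d ∧ Le L N P c d := by
  obtain ⟨d, hbd, hd⟩ := h (conjL (sel (fun I => Frc N I c) L))
    (List.mem_map.2 ⟨_, sel_mem _ _, rfl⟩)
    ⟨c, hac, (frc_conjL _ _ _).2 fun I hI => (mem_sel.1 hI).2⟩
  rw [frc_conjL] at hd
  exact ⟨d, hbd, fun I hI hIc => hd I (mem_sel.2 ⟨hI, hIc⟩)⟩

/-- Lift a graded relation between points to tuples. -/
def Lift {U V : Type} (r : ℕ → U → V → Prop) (as : List U) (bs : List V) : Prop :=
  ∃ as' a bs' b, as = as' ++ [a] ∧ bs = bs' ++ [b] ∧ as'.length = bs'.length ∧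
    r as'.length a b

theorem lift_iff {U V : Type} {r : ℕ → U → V → Prop} {as : List U} {bs : List V} {a : U}
    {b : V} : Lift r (as ++ [a]) (bs ++ [b]) ↔ as.length = bs.length ∧ r as.length a b := by
  constructor
  · rintro ⟨as', a', bs', b', h1, h2, h3, h4⟩
    obtain ⟨rfl, h5⟩ := List.append_inj' h1 rfl
    obtain ⟨rfl, h6⟩ := List.append_inj' h2 rfl
    obtain rfl := List.singleton_inj.1 h5
    obtain rfl := List.singleton_inj.1 h6
    exact ⟨h3, h4⟩
  · rintro ⟨h1, h2⟩
    exact ⟨as, a, bs, b, rfl, rfl, h1, h2⟩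

theorem lift_iff2 {U V : Type} {r : ℕ → U → V → Prop} {as : List U} {bs : List V} {a c : U}
    {b d : V} :
    Lift r (as ++ [a, c]) (bs ++ [b, d]) ↔ as.length = bs.length ∧ r (as.length + 1) c d := by
  have := @lift_iff U V r (as ++ [a]) (bs ++ [b]) c d
  simpa using this

theorem lift_iff3 {U V : Type} {r : ℕ → U → V → Prop} {as : List U} {bs : List V}
    {a c e : U} {b d f : V} : Lift r (as ++ [a, c, e]) (bs ++ [b, d, f]) ↔
      as.length = bs.length ∧ r (as.length + 2) e f := by
  have := @lift_iff U V r (as ++ [a, c]) (bs ++ [b, d]) e f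
  simpa using this

theorem lift_type {N P : Model} (r : ℕ → N.U → P.U → Prop) : TypeCond N P (Lift r) := by
  rintro as bs ⟨as', a, bs', b, rfl, rfl, h, -⟩
  simp [h]

/-- The first component of the canonical k-asimulation. -/
def canA (S : List ℕ) (k : ℕ) (N P : Model) : List N.U → List P.U → Prop :=
  Lift fun m => Le (gen S (k - m)) N P

/-- The second component of the canonical k-asimulation. -/
def canB (S : List ℕ) (k : ℕ) (N P : Model) : List N.U → List P.U → Prop :=
  Lift fun m => LeD (gen S (k - m - 1)) N P

theorem can_base (S : List ℕ) (k : ℕ) (N P : Model) :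
    BaseCond N P {n | n ∈ S} (canA S k N P) := by
  intro as bs a b hA n hn h
  exact (lift_iff.1 hA).2 (.prop n) (mem_gen_prop hn _) h

theorem can_step (S : List ℕ) (k : ℕ) (N P : Model) :
    StepCond N P k (canA S k N P) (canA S k P N) := by
  intro as bs a b d hA hbd hk
  obtain ⟨hl, h⟩ := lift_iff.1 hA
  obtain ⟨l, hl'⟩ : ∃ l, k - as.length = l + 1 := ⟨k - as.length - 1, by omega⟩
  rw [hl'] at h
  obtain ⟨c, hac, h1, h2⟩ := le_step h hbd
  have e1 : k - (as.length + 1) = l := by omega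
  have e2 : k - (bs.length + 1) = l := by omega
  exact ⟨c, hac, lift_iff2.2 ⟨hl, by rw [e1]; exact h1⟩,
    lift_iff2.2 ⟨hl.symm, by rw [e2]; exact h2⟩⟩

theorem can_box (S : List ℕ) (k : ℕ) (N P : Model) : Box2Cond N P k (canA S k N P) := by
  intro as bs a b d f hA hbd hdf hk
  obtain ⟨hl, h⟩ := lift_iff.1 hA
  obtain ⟨l, hl'⟩ : ∃ l, k - as.length = l + 2 := ⟨k - as.length - 2, by omega⟩
  rw [hl'] at h
  obtain ⟨c, e, hac, hce, h1⟩ := le_box h hbd hdf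
  have e1 : k - (as.length + 2) = l := by omega
  exact ⟨c, e, hac, hce, lift_iff3.2 ⟨hl, by rw [e1]; exact h1⟩⟩

theorem can_diamA (S : List ℕ) (k : ℕ) (N P : Model) :
    Diam2aCond N P k (canA S k N P) (canB S k N P) := by
  intro as bs a b d hA hbd hk
  obtain ⟨hl, h⟩ := lift_iff.1 hA
  obtain ⟨l, hl'⟩ : ∃ l, k - as.length = l + 2 := ⟨k - as.length - 2, by omega⟩
  rw [hl'] at h
  obtain ⟨c, hac, h1⟩ := le_diamA h hbd
  have e1 : k - (as.length + 1) - 1 = l := by omega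
  exact ⟨c, hac, lift_iff2.2 ⟨hl, by rw [e1]; exact h1⟩⟩

theorem can_diamB (S : List ℕ) (k : ℕ) (N P : Model) :
    Diam2bCond N P k (canB S k N P) (canA S k N P) := by
  intro as bs a c b hB hac hk
  obtain ⟨hl, h⟩ := lift_iff.1 hB
  obtain ⟨d, hbd, h1⟩ := le_diamB h hac
  have e1 : k - (as.length + 1) = k - as.length - 1 := by omega
  exact ⟨d, hbd, lift_iff2.2 ⟨hl, by rw [e1]; exact h1⟩⟩

theorem can_asim (S : List ℕ) (k : ℕ) (N P : Model) (t : N.U) (u : P.U)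
    (h : Le (gen S k) N P t u) :
    IsKAsimD2 false {n | n ∈ S} N P t u k (canA S k N P) (canA S k P N)
      (canB S k N P) (canB S k P N) :=
  ⟨lift_type _, lift_type _, lift_type _, lift_type _,
    (lift_iff (as := []) (bs := [])).2 ⟨rfl, h⟩,
    can_base _ _ _ _, can_base _ _ _ _, can_step _ _ _ _, can_step _ _ _ _,
    ⟨can_box _ _ _ _, can_box _ _ _ _⟩,
    can_diamA _ _ _ _, can_diamA _ _ _ _, can_diamB _ _ _ _, can_diamB _ _ _ _⟩

theorem satAt_iff {x : ℕ} {φ : FOForm} (hfv : φ.freeVars ⊆ {x}) (M : Model) (α : ℕ → M.U) :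
    SatAt M (α x) x φ ↔ Sat M φ α := by
  refine ⟨fun h => h α rfl, fun h β hβ => (sat_congr M φ β α fun v hv => ?_).2 h⟩
  have := Finset.mem_singleton.1 (hfv hv)
  subst this
  exact hβ

theorem dir2 (x : ℕ) (φ : FOForm) (hfv : φ.freeVars ⊆ {x}) (k : ℕ)
    (hk : KInvariantD2 false x φ k) : ∃ I : MForm, Equiv φ (ST false false I x) := by
  let G := gen φ.predLetters.toList k
  refine ⟨disjL (sel (fun I => ∀ (M : Model) (β : ℕ → M.U), Frc M I (β x) → Sat M φ β)
    (conjs G)), fun M α => ?_⟩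
  rw [sat_ST, frc_disjL]
  constructor
  · intro h
    refine ⟨conjL (sel (fun I => Frc M I (α x)) G), mem_sel.2
      ⟨List.mem_map.2 ⟨_, sel_mem _ _, rfl⟩, ?_⟩,
      (frc_conjL _ _ _).2 fun I hI => (mem_sel.1 hI).2⟩
    intro N β hβ
    rw [frc_conjL] at hβ
    have hle : Le G M N (α x) (β x) := fun I hI hIa => hβ I (mem_sel.2 ⟨hI, hIa⟩)
    have has := can_asim φ.predLetters.toList k M N (α x) (β x) hle
    exact (satAt_iff hfv N β).1
      (hk _ (fun n hn => Finset.mem_toList.2 hn) M N _ _ _ _ _ _ has (α x) (β x)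
        has.2.2.2.2.1 ((satAt_iff hfv M α).2 h))
  · rintro ⟨I, hI, hF⟩
    exact (mem_sel.1 hI).2 M α hF

/-- **Theorem 1, case (i,j) = (2,2).**  φ(x) is logically equivalent to the
(2,2)-standard x-translation of a modal intuitionistic formula iff there is a
k ∈ ℕ such that φ(x) is invariant with respect to (2,2)-modal k-asimulations. -/
theorem statement_0 (x : ℕ) (φ : FOForm) (hfv : φ.freeVars ⊆ {x}) :
    (∃ I : MForm, Equiv φ (ST false false I x)) ↔
    (∃ k : ℕ, KInvariantD2 false x φ k) := by
  exact ⟨fun ⟨I, hI⟩ => ⟨mdeg I, dir1 x φ I hI⟩, fun ⟨k, hk⟩ => dir2 x φ hfv k hk⟩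

end ModalIntAsim
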